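/- Let 0 ≤ s < t ≤ T, let m, n ≥ 1 be integers and k ∈ {1, …, m}, and let g₁, …, g_n : [0,T] → ℝ and f₁, …, f_m : [0,T] → ℝ be bounded Borel measurable functions. Then ∫_{Λ^m_{s,t}} ( ∫_{Λ^n_{s,u_k}} ∏_{j=1}^n g_j(v_j) dv₁ ⋯ dv_n ) ∏_{i=1}^m f_i(u_i) du₁ ⋯ du_m = Σ_{σ ∈ S_k(m,n)} ∫_{Λ^{m+n}_{s,t}} ∏_{i=1}^{m+n} h_i(w_{σ(i)}) dw₁ ⋯ dw_{m+n}, where (h₁, …, h_{m+n}) := (g₁, …, g_n, f₁, …, f_m). -/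

import Mathlib

open MeasureTheory

/-- The open simplex `Λ^m_{s,t} = {u ∈ ℝ^m : s < u₁ < ⋯ < u_m < t}`. -/
def simplexSet (m : ℕ) (s t : ℝ) : Set (Fin m → ℝ) :=
  {u | StrictMono u ∧ ∀ i, u i ∈ Set.Ioo s t}

/-- The set of all `(v, u)` with `u` in the simplex and `v` in the simplex below `u k`. -/
def nestedSet (n m : ℕ) (k : Fin m) (s t : ℝ) : Set (Fin (n + m) → ℝ) :=
  {x | (fun i => x (Fin.castAdd m i)) ∈ simplexSet n s (x (Fin.natAdd n k)) ∧
    (fun j => x (Fin.natAdd n j)) ∈ simplexSet m s t}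

/-- The condition defining `S_k(m,n)`. -/
def IsShuf (n m : ℕ) (k : Fin m) (σ : Equiv.Perm (Fin (n + m))) : Prop :=
  (StrictMono fun i : Fin n => σ (Fin.castAdd m i)) ∧
    (StrictMono fun j : Fin m => σ (Fin.natAdd n j)) ∧
    (∀ j : Fin m, k ≤ j → σ (Fin.natAdd n j) = Fin.natAdd n j)

lemma perm_fix {N : ℕ} (σ : Equiv.Perm (Fin N)) (a : Fin N)
    (h : ∀ i, σ i < σ a ↔ i < a) : σ a = a := by
  have h1 : (Finset.Iio a).map σ.toEmbedding = Finset.Iio (σ a) := by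
    ext y
    simp only [Finset.mem_map_equiv, Finset.mem_Iio]
    rw [← h]; simp
  have h2 := congrArg Finset.card h1
  simp only [Finset.card_map, Fin.card_Iio] at h2
  exact Fin.ext h2.symm

lemma mem_nested_iff {n m : ℕ} {k : Fin m} {s t : ℝ} (w : Fin (n + m) → ℝ) (hw : StrictMono w)
    (σ : Equiv.Perm (Fin (n + m))) :
    (w ∘ σ) ∈ nestedSet n m k s t ↔ IsShuf n m k σ ∧ w ∈ simplexSet (n + m) s t := by
  constructor
  · rintro ⟨⟨h1, h2⟩, h3, h4⟩
    have hc : StrictMono fun i : Fin n => σ (Fin.castAdd m i) :=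
      fun i j hij => hw.lt_iff_lt.1 (h1 hij)
    have hd : StrictMono fun i : Fin m => σ (Fin.natAdd n i) :=
      fun i j hij => hw.lt_iff_lt.1 (h3 hij)
    refine ⟨⟨hc, hd, ?_⟩, hw, ?_⟩
    · intro j hj
      apply perm_fix
      intro i
      induction i using Fin.addCases with
      | left i =>
        have a1 : Fin.castAdd m i < Fin.natAdd n j := by
          rw [Fin.lt_def]; simp only [Fin.val_castAdd, Fin.val_natAdd]; omega
        have a2 : σ (Fin.castAdd m i) < σ (Fin.natAdd n k) := hw.lt_iff_lt.1 (h2 i).2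
        exact ⟨fun _ => a1, fun _ => a2.trans_le (hd.monotone hj)⟩
      | right i =>
        rw [hd.lt_iff_lt (a := i) (b := j)]
        simp
    · intro p
      obtain ⟨i, rfl⟩ := σ.surjective p
      induction i using Fin.addCases with
      | left i => exact ⟨(h2 i).1, (h2 i).2.trans (h4 k).2⟩
      | right i => exact h4 i
  · rintro ⟨⟨hc, hd, he⟩, -, h4⟩
    refine ⟨⟨fun i j hij => hw (hc hij), fun i => ⟨(h4 _).1, hw ?_⟩⟩,
      fun i j hij => hw (hd hij), fun i => h4 _⟩
    by_contra hlt
    rw [he k le_rfl, not_lt] at hlt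
    generalize hp : σ (Fin.castAdd m i) = p at hlt
    induction p using Fin.addCases with
    | left p => 
      rw [Fin.le_def] at hlt; simp only [Fin.val_castAdd, Fin.val_natAdd] at hlt; omega
    | right p =>
      have hkp : k ≤ p := by
        rw [Fin.le_def] at hlt ⊢; simp only [Fin.val_natAdd] at hlt; omega
      rw [← he p hkp] at hp
      have := congrArg Fin.val (σ.injective hp)
      simp only [Fin.val_castAdd, Fin.val_natAdd] at this
      omega

lemma exists_sort {N : ℕ} (x : Fin N → ℝ) (hx : Function.Injective x) :
    ∃ σ : Equiv.Perm (Fin N), StrictMono (x ∘ σ.symm) := by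
  refine ⟨(Tuple.sort x).symm, ?_⟩
  exact (Tuple.monotone_sort x).strictMono_of_injective (hx.comp (Equiv.injective _))

lemma sort_unique {N : ℕ} (x : Fin N → ℝ) (σ τ : Equiv.Perm (Fin N))
    (h1 : StrictMono (x ∘ σ.symm)) (h2 : StrictMono (x ∘ τ.symm)) : σ = τ := by
  have h := Tuple.unique_monotone h1.monotone h2.monotone
  have hx : Function.Injective x := by
    have := h1.injective.comp σ.injective
    simpa [Function.comp_assoc] using this
  have h' : σ.symm = τ.symm := Equiv.ext fun i => hx (congrFun h i)
  simpa using congrArg Equiv.symm h'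

lemma ae_injective (N : ℕ) : ∀ᵐ x : Fin N → ℝ, Function.Injective x := by
  have h : ∀ i j : Fin N, i ≠ j → ∀ᵐ x : Fin N → ℝ, x i ≠ x j := by
    intro i j hij
    let L : (Fin N → ℝ) →ₗ[ℝ] ℝ := (LinearMap.proj (R := ℝ) (φ := fun _ : Fin N => ℝ) i) -
      (LinearMap.proj (R := ℝ) (φ := fun _ : Fin N => ℝ) j)
    have hL : LinearMap.ker L ≠ ⊤ := by
      intro hL
      have : (Pi.single i 1 : Fin N → ℝ) ∈ LinearMap.ker L := by rw [hL]; trivial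
      simp [L, hij.symm] at this
    have := Measure.addHaar_submodule (volume : Measure (Fin N → ℝ)) _ hL
    rw [ae_iff]
    convert this using 2
    ext x
    simp [L, sub_eq_zero]
  have h2 : ∀ᵐ x : Fin N → ℝ, ∀ i j : Fin N, i ≠ j → x i ≠ x j := by
    rw [ae_all_iff]; intro i
    rw [ae_all_iff]; intro j
    by_cases hij : i = j
    · simp [hij]
    · filter_upwards [h i j hij] with x hx _ using hx
  filter_upwards [h2] with x hx i j hij
  by_contra hne
  exact hx i j hne hij

lemma measurableSet_strictMono (N : ℕ) : MeasurableSet {x : Fin N → ℝ | StrictMono x} := by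
  have : {x : Fin N → ℝ | StrictMono x} = ⋂ i, ⋂ j, ⋂ (_ : i < j), {x | x i < x j} := by
    ext x; simp [StrictMono]
  rw [this]
  refine MeasurableSet.iInter fun i => MeasurableSet.iInter fun j => MeasurableSet.iInter fun _ => ?_
  exact measurableSet_lt (measurable_pi_apply _) (measurable_pi_apply _)

lemma measurableSet_simplexSet (N : ℕ) (s t : ℝ) : MeasurableSet (simplexSet N s t) := by
  have : simplexSet N s t = {x | StrictMono x} ∩ ⋂ i, {x | x i ∈ Set.Ioo s t} := by
    ext x; simp [simplexSet]
  rw [this]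
  exact (measurableSet_strictMono N).inter
    (MeasurableSet.iInter fun i => measurable_pi_apply i measurableSet_Ioo)

lemma measurableSet_nestedSet (n m : ℕ) (k : Fin m) (s t : ℝ) :
    MeasurableSet (nestedSet n m k s t) := by
  have : nestedSet n m k s t = ((fun x => fun i => x (Fin.castAdd m i)) ⁻¹' {x | StrictMono x} ∩
      ⋂ i : Fin n, ({x | s < x (Fin.castAdd m i)} ∩
        {x | x (Fin.castAdd m i) < x (Fin.natAdd n k)})) ∩
      (fun x => fun j => x (Fin.natAdd n j)) ⁻¹' simplexSet m s t := by
    ext x; simp [simplexSet, nestedSet]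
  rw [this]
  refine MeasurableSet.inter (MeasurableSet.inter ?_ (MeasurableSet.iInter fun i => ?_)) ?_
  · exact (measurable_pi_lambda _ fun i => measurable_pi_apply _) (measurableSet_strictMono n)
  · exact (measurableSet_lt measurable_const (measurable_pi_apply _)).inter
      (measurableSet_lt (measurable_pi_apply _) (measurable_pi_apply _))
  · exact (measurable_pi_lambda _ fun i => measurable_pi_apply _) (measurableSet_simplexSet m s t)

lemma integrableOn_prod {N : ℕ} (h : Fin N → ℝ → ℝ) (hh : ∀ i, Measurable (h i)) (C : ℝ)
    (hC : ∀ i x, |h i x| ≤ C) (s t : ℝ) :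
    IntegrableOn (fun x : Fin N → ℝ => ∏ i, h i (x i)) (Set.Icc (fun _ => s) (fun _ => t)) := by
  refine Measure.integrableOn_of_bounded (M := C ^ N) ?_ ?_ ?_
  · exact isCompact_Icc.measure_lt_top.ne
  · exact (Finset.measurable_prod _ fun i _ =>
      (hh i).comp (measurable_pi_apply i)).aestronglyMeasurable
  · refine Filter.Eventually.of_forall fun x => ?_
    rw [Real.norm_eq_abs, Finset.abs_prod]
    calc _ ≤ ∏ i : Fin N, C := Finset.prod_le_prod (fun _ _ => abs_nonneg _) fun i _ => hC i _
      _ = _ := by simp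

lemma integral_nested_eq {n m : ℕ} (k : Fin m) (s t : ℝ) (g : Fin n → ℝ → ℝ) (f : Fin m → ℝ → ℝ)
    (hint : IntegrableOn (fun x : Fin (n + m) → ℝ => ∏ i, Fin.append g f i (x i))
      (nestedSet n m k s t)) :
    (∫ u in simplexSet m s t,
        (∫ v in simplexSet n s (u k), ∏ j, g j (v j)) * ∏ i, f i (u i)) =
      ∫ x in nestedSet n m k s t, ∏ i, Fin.append g f i (x i) := by
  let e : (Fin (n + m) → ℝ) ≃ᵐ (Fin n → ℝ) × (Fin m → ℝ) :=
    (MeasurableEquiv.piCongrLeft (fun _ => ℝ) finSumFinEquiv).symm.trans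
      (MeasurableEquiv.sumPiEquivProdPi (fun _ => ℝ))
  have he : ∀ x, e x = (fun i => x (Fin.castAdd m i), fun j => x (Fin.natAdd n j)) :=
    fun x => rfl
  have hmp : MeasurePreserving e volume volume :=
    ((volume_measurePreserving_piCongrLeft (fun _ => ℝ) finSumFinEquiv).symm).trans
      (volume_measurePreserving_sumPiEquivProdPi (fun _ => ℝ))
  let B : Set ((Fin n → ℝ) × (Fin m → ℝ)) :=
    {p | p.1 ∈ simplexSet n s (p.2 k) ∧ p.2 ∈ simplexSet m s t}
  let F : (Fin n → ℝ) × (Fin m → ℝ) → ℝ := fun p => (∏ j, g j (p.1 j)) * ∏ i, f i (p.2 i)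
  have hB : nestedSet n m k s t = e ⁻¹' B := rfl
  have hF : (fun x : Fin (n + m) → ℝ => ∏ i, Fin.append g f i (x i)) = F ∘ e := by
    funext x
    simp only [Fin.prod_univ_add, Fin.append_left, Fin.append_right, F, he, Function.comp]
  have hBm : MeasurableSet B := by
    rw [← e.measurableSet_preimage]; exact measurableSet_nestedSet n m k s t
  rw [hB, hF] at hint
  have hint' : IntegrableOn F B := (hmp.integrableOn_comp_preimage e.measurableEmbedding).1 hint
  have h1 : ∫ x in nestedSet n m k s t, ∏ i, Fin.append g f i (x i) = ∫ p in B, F p := by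
    rw [hB, ← hmp.setIntegral_preimage_emb e.measurableEmbedding, hF]; rfl
  rw [h1, ← integral_indicator hBm]
  have h2 := integral_prod_symm (μ := (volume : Measure (Fin n → ℝ)))
    (ν := (volume : Measure (Fin m → ℝ))) (B.indicator F) (hint'.integrable_indicator hBm)
  rw [Measure.volume_eq_prod, h2, ← integral_indicator (measurableSet_simplexSet m s t)]
  congr 1
  funext u
  by_cases hu : u ∈ simplexSet m s t
  · rw [Set.indicator_of_mem hu, ← integral_mul_const,
      ← integral_indicator (measurableSet_simplexSet n s (u k))]
    congr 1
    funext v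
    by_cases hv : v ∈ simplexSet n s (u k)
    · rw [Set.indicator_of_mem hv, Set.indicator_of_mem (show (v, u) ∈ B from ⟨hv, hu⟩)]
    · rw [Set.indicator_of_notMem hv, Set.indicator_of_notMem (fun h : (v, u) ∈ B => hv h.1)]
  · rw [Set.indicator_of_notMem hu]
    have : ∀ v, B.indicator F (v, u) = 0 := fun v =>
      Set.indicator_of_notMem (fun h : (v, u) ∈ B => hu h.2) _
    simp [this]

open Classical in
/-- The nested-shuffle formula: for bounded Borel functions
`g₁, …, g_n` and `f₁, …, f_m` on `[0,T]`, and `k` among the `u`-variables,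
`∫_{Λ^m_{s,t}} (∫_{Λ^n_{s,u_k}} Π_j g_j(v_j) dv) Π_i f_i(u_i) du
  = Σ_{σ ∈ S_k(m,n)} ∫_{Λ^{m+n}_{s,t}} Π_i h_i(w_{σ(i)}) dw`,
where `h = (g₁, …, g_n, f₁, …, f_m)` and `S_k(m,n)` consists of the permutations of
`{1, …, n+m}` increasing on the first `n` indices, increasing on the last `m` indices,
and fixing the positions of the `u`-variables from the `k`-th one on. -/
theorem integral_nested_simplex_eq_sum_shuffles
    (T : ℝ) (hT : 0 < T) (s t : ℝ) (hs : 0 ≤ s) (hst : s < t) (htT : t ≤ T)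
    (m n : ℕ) (hm : 1 ≤ m) (hn : 1 ≤ n) (k : Fin m)
    (g : Fin n → ℝ → ℝ) (f : Fin m → ℝ → ℝ)
    (hg : ∀ j, Measurable (g j)) (hf : ∀ i, Measurable (f i))
    (C : ℝ) (hgC : ∀ j, ∀ x, |g j x| ≤ C) (hfC : ∀ i, ∀ x, |f i x| ≤ C) :
    (∫ u in simplexSet m s t,
        (∫ v in simplexSet n s (u k), ∏ j, g j (v j)) * ∏ i, f i (u i)) =
      ∑ σ : Equiv.Perm (Fin (n + m)),
        if (StrictMono fun i : Fin n => σ (Fin.castAdd m i)) ∧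
            (StrictMono fun j : Fin m => σ (Fin.natAdd n j)) ∧
            (∀ j : Fin m, k ≤ j → σ (Fin.natAdd n j) = Fin.natAdd n j) then
          ∫ w in simplexSet (n + m) s t,
            ∏ i : Fin (n + m), Fin.append g f i (w (σ i))
        else 0 := by
  let P : (Fin (n + m) → ℝ) → ℝ := fun x => ∏ i, Fin.append g f i (x i)
  let D : Equiv.Perm (Fin (n + m)) → Set (Fin (n + m) → ℝ) :=
    fun σ => {x | x ∘ σ.symm ∈ simplexSet (n + m) s t}
  let R : Equiv.Perm (Fin (n + m)) → (Fin (n + m) → ℝ) ≃ᵐ (Fin (n + m) → ℝ) :=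
    fun σ => MeasurableEquiv.piCongrLeft (fun _ => ℝ) σ
  have hR : ∀ σ x, R σ x = x ∘ σ.symm := by
    intro σ x
    have : (R σ).symm (x ∘ σ.symm) = x := by
      funext i
      change (x ∘ σ.symm) (σ i) = x i
      simp
    rw [← this, MeasurableEquiv.apply_symm_apply, this]
  have hRm : ∀ σ, MeasurePreserving (R σ) volume volume :=
    fun σ => volume_measurePreserving_piCongrLeft (fun _ => ℝ) σ
  have hDR : ∀ σ, D σ = R σ ⁻¹' simplexSet (n + m) s t := by
    intro σ; ext x; simp only [Set.mem_preimage, hR]; rfl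
  have hDm : ∀ σ, MeasurableSet (D σ) := by
    intro σ; rw [hDR]; exact (R σ).measurable (measurableSet_simplexSet _ _ _)
  have hP : IntegrableOn P (Set.Icc (fun _ => s) (fun _ => t)) := by
    apply integrableOn_prod _ _ C
    · intro i
      induction i using Fin.addCases with
      | left i => simpa using hgC i
      | right i => simpa using hfC i
    · intro i
      induction i using Fin.addCases with
      | left i => simpa using hg i
      | right i => simpa using hf i
  have hDI : ∀ σ, D σ ⊆ Set.Icc (fun _ => s) (fun _ => t) := by
    intro σ x hx
    have : ∀ i, x i ∈ Set.Ioo s t := fun i => by simpa using hx.2 (σ i)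
    exact ⟨fun i => (this i).1.le, fun i => (this i).2.le⟩
  have hNI : nestedSet n m k s t ⊆ Set.Icc (fun _ => s) (fun _ => t) := by
    intro x hx
    have : ∀ i, x i ∈ Set.Ioo s t := fun i => by
      induction i using Fin.addCases with
      | left i => exact ⟨(hx.1.2 i).1, (hx.1.2 i).2.trans (hx.2.2 k).2⟩
      | right i => exact hx.2.2 i
    exact ⟨fun i => (this i).1.le, fun i => (this i).2.le⟩
  rw [integral_nested_eq k s t g f (hP.mono_set hNI), ← Finset.sum_filter]
  have hterm : ∀ σ : Equiv.Perm (Fin (n + m)),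
      ∫ w in simplexSet (n + m) s t, ∏ i : Fin (n + m), Fin.append g f i (w (σ i)) =
        ∫ x in D σ, P x := by
    intro σ
    rw [hDR, ← (hRm σ).setIntegral_preimage_emb (R σ).measurableEmbedding]
    simp only [hR, Function.comp, Equiv.symm_apply_apply, P]
  rw [Finset.sum_congr rfl fun σ _ => hterm σ]
  rw [← integral_biUnion_finset _ (fun σ _ => hDm σ) ?_ (fun σ _ => hP.mono_set (hDI σ))]
  · apply setIntegral_congr_set
    rw [Filter.eventuallyEq_set]
    filter_upwards [ae_injective (n + m)] with x hx
    simp only [Set.mem_iUnion, Finset.mem_filter, Finset.mem_univ, true_and, exists_prop]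
    have hxs : ∀ σ : Equiv.Perm (Fin (n + m)), (x ∘ σ.symm) ∘ σ = x := fun σ => by
      funext i; simp
    constructor
    · intro hxn
      obtain ⟨σ, hσ⟩ := exists_sort x hx
      have := (mem_nested_iff (x ∘ σ.symm) hσ σ).1 (by rw [hxs]; exact hxn)
      exact ⟨σ, this.1, this.2⟩
    · rintro ⟨σ, h1, h2⟩
      have := (mem_nested_iff (k := k) (s := s) (t := t) (x ∘ σ.symm) h2.1 σ).2 ⟨h1, h2⟩
      rwa [hxs] at this
  · intro σ _ τ _ hne
    refine Set.disjoint_left.2 fun x h1 h2 => hne (sort_unique x σ τ h1.1 h2.1)
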